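/- Let j, k ∈ ℕ and τ ∈ ℝ. Then ∫_ℝ φ_j(s + 2iτ)·φ_k(s + 2iτ) ds = δ_{jk} (Kronecker delta). That is, the complex-shifted normalized Hermite functions satisfy the same bilinear orthonormality relations as on the real line. -/

import Mathlib

/-- The normalized Hermite function `φ_j(z) = (j!·√(2π))^(−1/2)·exp(−z²/4)·F_j(z)`,
extended to an entire function on `ℂ`. -/
noncomputable def hermiteFun (j : ℕ) (z : ℂ) : ℂ :=
  ((((j.factorial : ℝ) * Real.sqrt (2 * Real.pi)) ^ (-(1 : ℝ) / 2) : ℝ) : ℂ) *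
    Complex.exp (-z ^ 2 / 4) * Polynomial.aeval z (Polynomial.hermite j)

/-!
Along the line `ℝ + c` the function `exp (-z² / 2) p(z)` decays for every polynomial `p`, so its
derivative integrates to zero: multiplication by `z` and differentiation have the same integral
against the Gaussian. Since `F_{j+1} = z F_j - F_j'`, each index of `F_j` can be traded for a
derivative on the other factor, so `∫ exp (-z² / 2) F_j q = ∫ exp (-z² / 2) q^(j)`. For `q = F_k`
with `k ≤ j` the right-hand side is a Gaussian integral of the constant `j! δ_{jk}`, and the
Gaussian integral itself does not depend on `c`.
-/

open MeasureTheory Polynomial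

section Gaussian

theorem abs_pow_le_factorial_mul_exp_add_exp_neg (n : ℕ) (x : ℝ) :
    |x| ^ n ≤ n.factorial * (Real.exp x + Real.exp (-x)) := by
  have pow_le : |x| ^ n ≤ n.factorial * Real.exp |x| :=
    (div_le_iff₀' (by positivity)).1 (Real.pow_div_factorial_le_exp |x| (abs_nonneg x) n)
  exact pow_le.trans (by gcongr; exact Real.exp_abs_le x)

-- The factors `exp (± x)` that dominate `x ^ n` only change the linear term of the exponent.
theorem integrable_pow_mul_cexp_quadratic {b : ℂ} (hb : b.re < 0) (c d : ℂ) (n : ℕ) :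
    Integrable fun x : ℝ => (x : ℂ) ^ n * Complex.exp (b * x ^ 2 + c * x + d) := by
  have norm_exp_shift (r x : ℝ) : ‖Complex.exp (b * x ^ 2 + (c + r) * x + d)‖ =
      Real.exp (r * x) * ‖Complex.exp (b * x ^ 2 + c * x + d)‖ := by
    rw [← Complex.norm_exp_ofReal, ← norm_mul, ← Complex.exp_add]
    congr 2
    push_cast
    ring
  have dominated := ((integrable_cexp_quadratic' hb (c + (1 : ℝ)) d).norm.add
    (integrable_cexp_quadratic' hb (c + (-1 : ℝ)) d).norm).const_mul (n.factorial : ℝ)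
  refine dominated.mono' (by fun_prop) (.of_forall fun x => ?_)
  simp only [Pi.add_apply, norm_exp_shift, ← add_mul, ← mul_assoc, norm_mul, norm_pow,
    Complex.norm_real, Real.norm_eq_abs, one_mul, neg_one_mul]
  gcongr
  exact abs_pow_le_factorial_mul_exp_add_exp_neg n x

theorem integrable_eval_mul_cexp_quadratic {b : ℂ} (hb : b.re < 0) (c d : ℂ) (p : ℂ[X]) :
    Integrable fun x : ℝ => p.eval (x : ℂ) * Complex.exp (b * x ^ 2 + c * x + d) := by
  simp only [eval_eq_sum_range, Finset.sum_mul, mul_assoc]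
  exact integrable_finsetSum _ fun n _ =>
    (integrable_pow_mul_cexp_quadratic hb c d n).const_mul (p.coeff n)

theorem neg_add_sq_div_two_eq_quadratic (c x : ℂ) :
    -(x + c) ^ 2 / 2 = -1 / 2 * x ^ 2 + -c * x + -c ^ 2 / 2 := by
  ring

theorem integrable_cexp_neg_sq_div_two_mul_eval (c : ℂ) (p : ℂ[X]) :
    Integrable fun s : ℝ => Complex.exp (-((s : ℂ) + c) ^ 2 / 2) * p.eval ((s : ℂ) + c) := by
  have hint := integrable_eval_mul_cexp_quadratic (b := -1 / 2) (by norm_num) (-c) (-c ^ 2 / 2)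
    (p.comp (X + C c))
  simpa only [neg_add_sq_div_two_eq_quadratic, eval_comp, eval_add, eval_X, eval_C, mul_comm]
    using hint

theorem integral_cexp_neg_sq_div_two (c : ℂ) :
    ∫ s : ℝ, Complex.exp (-((s : ℂ) + c) ^ 2 / 2) = (√(2 * Real.pi) : ℝ) := by
  have exponent_eq_zero : -c ^ 2 / 2 - (-c) ^ 2 / (4 * (-1 / 2)) = 0 := by ring
  simp only [neg_add_sq_div_two_eq_quadratic]
  rw [integral_cexp_quadratic (by norm_num), exponent_eq_zero, Complex.exp_zero, mul_one,
    Real.sqrt_eq_rpow, Complex.ofReal_cpow (by positivity)]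
  congr 1 <;> push_cast <;> ring

theorem hasDerivAt_cexp_neg_sq_div_two_mul_eval (p : ℂ[X]) (z : ℂ) :
    HasDerivAt (fun w => Complex.exp (-w ^ 2 / 2) * p.eval w)
      (Complex.exp (-z ^ 2 / 2) * (derivative p - X * p).eval z) z := by
  have hexp : HasDerivAt (fun w : ℂ => Complex.exp (-w ^ 2 / 2))
      (Complex.exp (-z ^ 2 / 2) * -z) z :=
    (((hasDerivAt_pow 2 z).neg.div_const 2).congr_deriv (by simp [neg_div])).cexp
  refine (hexp.mul (p.hasDerivAt z)).congr_deriv ?_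
  simp only [eval_sub, eval_mul, eval_X]
  ring

/-- Integration of a polynomial over the line `ℝ + c` against the complex Gaussian
`exp (-z² / 2)`, as a linear functional. The line is parametrised by `s ↦ s + c` with `s` real, so
no complex conjugation is involved. -/
noncomputable def gaussianFunctional (c : ℂ) : ℂ[X] →ₗ[ℂ] ℂ where
  toFun p := ∫ s : ℝ, Complex.exp (-((s : ℂ) + c) ^ 2 / 2) * p.eval ((s : ℂ) + c)
  map_add' p q := by
    simp only [eval_add, mul_add]
    exact integral_add (integrable_cexp_neg_sq_div_two_mul_eval c p)
      (integrable_cexp_neg_sq_div_two_mul_eval c q)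
  map_smul' a p := by
    simp only [eval_smul, smul_eq_mul, mul_left_comm _ a, integral_const_mul, RingHom.id_apply]

theorem gaussianFunctional_apply (c : ℂ) (p : ℂ[X]) : gaussianFunctional c p =
    ∫ s : ℝ, Complex.exp (-((s : ℂ) + c) ^ 2 / 2) * p.eval ((s : ℂ) + c) :=
  rfl

theorem gaussianFunctional_C (c a : ℂ) :
    gaussianFunctional c (C a) = a * (√(2 * Real.pi) : ℝ) := by
  simp only [gaussianFunctional_apply, eval_C, integral_mul_const, integral_cexp_neg_sq_div_two]
  exact mul_comm _ _

theorem gaussianFunctional_X_mul (c : ℂ) (p : ℂ[X]) :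
    gaussianFunctional c (X * p) = gaussianFunctional c (derivative p) := by
  have integral_deriv_eq_zero : gaussianFunctional c (derivative p - X * p) = 0 :=
    integral_eq_zero_of_hasDerivAt_of_integrable
      (fun s => ((hasDerivAt_cexp_neg_sq_div_two_mul_eval p (s + c)).comp_add_const
        (s : ℂ) c).comp_ofReal)
      (integrable_cexp_neg_sq_div_two_mul_eval c _) (integrable_cexp_neg_sq_div_two_mul_eval c p)
  rw [map_sub, sub_eq_zero] at integral_deriv_eq_zero
  exact integral_deriv_eq_zero.symm

end Gaussian

section Hermite

theorem iterate_derivative_natDegree_eq_C {R : Type*} [Semiring R] (p : R[X]) :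
    derivative^[p.natDegree] p = C (p.natDegree.factorial * p.leadingCoeff) := by
  have natDegree_eq_zero : (derivative^[p.natDegree] p).natDegree = 0 :=
    Nat.le_zero.1 ((natDegree_iterate_derivative p _).trans_eq (Nat.sub_self _))
  rw [eq_C_of_natDegree_eq_zero natDegree_eq_zero, coeff_iterate_derivative, zero_add,
    Nat.descFactorial_self, nsmul_eq_mul, leadingCoeff]

/-- The probabilists' Hermite polynomial `F_n` with its integer coefficients regarded as complex
numbers, so that `gaussianFunctional` applies to it. -/
noncomputable def complexHermite (n : ℕ) : ℂ[X] :=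
  (hermite n).map (Int.castRingHom ℂ)

theorem complexHermite_zero : complexHermite 0 = 1 := by
  simp [complexHermite]

theorem complexHermite_succ (n : ℕ) :
    complexHermite (n + 1) = X * complexHermite n - derivative (complexHermite n) := by
  simp [complexHermite, hermite_succ, derivative_map]

theorem complexHermite_monic (n : ℕ) : (complexHermite n).Monic :=
  (hermite_monic n).map _

theorem natDegree_complexHermite (n : ℕ) : (complexHermite n).natDegree = n :=
  ((hermite_monic n).natDegree_map _).trans natDegree_hermite

theorem eval_complexHermite (n : ℕ) (z : ℂ) : (complexHermite n).eval z = aeval z (hermite n) :=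
  eval_map_algebraMap (hermite n) z

theorem gaussianFunctional_complexHermite_succ_mul (c : ℂ) (n : ℕ) (q : ℂ[X]) :
    gaussianFunctional c (complexHermite (n + 1) * q) =
      gaussianFunctional c (complexHermite n * derivative q) := by
  rw [complexHermite_succ, sub_mul, mul_assoc, map_sub, gaussianFunctional_X_mul, derivative_mul,
    map_add, add_sub_cancel_left]

theorem gaussianFunctional_complexHermite_mul (c : ℂ) (n : ℕ) (q : ℂ[X]) :
    gaussianFunctional c (complexHermite n * q) = gaussianFunctional c (derivative^[n] q) := by
  induction n generalizing q with
  | zero => rw [complexHermite_zero, one_mul, Function.iterate_zero_apply]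
  | succ n ih =>
    rw [gaussianFunctional_complexHermite_succ_mul, ih, Function.iterate_succ_apply]

theorem gaussianFunctional_complexHermite_mul_eq_zero_of_natDegree_lt (c : ℂ) {n : ℕ} {q : ℂ[X]}
    (hq : q.natDegree < n) : gaussianFunctional c (complexHermite n * q) = 0 := by
  rw [gaussianFunctional_complexHermite_mul, iterate_derivative_eq_zero hq, map_zero]

theorem gaussianFunctional_complexHermite_natDegree_mul (c : ℂ) (q : ℂ[X]) :
    gaussianFunctional c (complexHermite q.natDegree * q) =
      q.natDegree.factorial * q.leadingCoeff * (√(2 * Real.pi) : ℝ) := by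
  rw [gaussianFunctional_complexHermite_mul, iterate_derivative_natDegree_eq_C,
    gaussianFunctional_C]

theorem gaussianFunctional_complexHermite_mul_self (c : ℂ) (n : ℕ) :
    gaussianFunctional c (complexHermite n * complexHermite n) =
      ((n.factorial * √(2 * Real.pi) : ℝ) : ℂ) := by
  have h := gaussianFunctional_complexHermite_natDegree_mul c (complexHermite n)
  rw [natDegree_complexHermite, (complexHermite_monic n).leadingCoeff, mul_one] at h
  exact_mod_cast h

theorem gaussianFunctional_complexHermite_mul_of_ne (c : ℂ) {j k : ℕ} (hjk : j ≠ k) :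
    gaussianFunctional c (complexHermite j * complexHermite k) = 0 := by
  wlog hlt : k < j generalizing j k
  · rw [mul_comm]
    exact this hjk.symm (by lia)
  · exact gaussianFunctional_complexHermite_mul_eq_zero_of_natDegree_lt c
      (by rwa [natDegree_complexHermite])

/-- The constant `(n!·√(2π))^(-1/2)` that normalizes the Hermite function `φ_n`. -/
noncomputable def hermiteNormalization (n : ℕ) : ℝ :=
  (n.factorial * √(2 * Real.pi)) ^ (-(1 : ℝ) / 2)

theorem hermiteNormalization_mul_self_mul (n : ℕ) :
    hermiteNormalization n * hermiteNormalization n * (n.factorial * √(2 * Real.pi)) = 1 := by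
  have norm_sq_pos : 0 < n.factorial * √(2 * Real.pi) := by positivity
  rw [hermiteNormalization, ← Real.rpow_add norm_sq_pos, ← Real.rpow_add_one norm_sq_pos.ne']
  norm_num

theorem hermiteFun_mul_hermiteFun (j k : ℕ) (z : ℂ) :
    hermiteFun j z * hermiteFun k z = hermiteNormalization j * hermiteNormalization k *
      (Complex.exp (-z ^ 2 / 2) * (complexHermite j * complexHermite k).eval z) := by
  have exp_split : Complex.exp (-z ^ 2 / 2) =
      Complex.exp (-z ^ 2 / 4) * Complex.exp (-z ^ 2 / 4) := by
    rw [← Complex.exp_add]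
    ring_nf
  rw [exp_split, eval_mul, eval_complexHermite, eval_complexHermite, hermiteFun, hermiteFun,
    ← hermiteNormalization, ← hermiteNormalization]
  ring

theorem integral_hermiteFun_mul_hermiteFun (j k : ℕ) (c : ℂ) :
    ∫ s : ℝ, hermiteFun j ((s : ℂ) + c) * hermiteFun k ((s : ℂ) + c) =
      hermiteNormalization j * hermiteNormalization k *
        gaussianFunctional c (complexHermite j * complexHermite k) := by
  simp only [hermiteFun_mul_hermiteFun, integral_const_mul, gaussianFunctional_apply]

end Hermite

theorem stmt_9_general (j k : ℕ) (c : ℂ) :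
    ∫ s : ℝ, hermiteFun j ((s : ℂ) + c) * hermiteFun k ((s : ℂ) + c) =
      if j = k then 1 else 0 := by
  rw [integral_hermiteFun_mul_hermiteFun]
  split_ifs with hjk
  · subst hjk
    rw [gaussianFunctional_complexHermite_mul_self]
    exact_mod_cast hermiteNormalization_mul_self_mul j
  · rw [gaussianFunctional_complexHermite_mul_of_ne c hjk, mul_zero]

/-- Bilinear orthonormality of the complex-shifted normalized Hermite functions:
`∫_ℝ φ_j(s + 2iτ)·φ_k(s + 2iτ) ds = δ_{jk}`. -/
theorem stmt_9 (j k : ℕ) (τ : ℝ) :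
    ∫ s : ℝ, hermiteFun j ((s : ℂ) + 2 * Complex.I * (τ : ℂ)) *
        hermiteFun k ((s : ℂ) + 2 * Complex.I * (τ : ℂ)) =
      if j = k then 1 else 0 :=
  stmt_9_general j k (2 * Complex.I * τ)
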